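/- Let A be a commutative ring and let Q be a commutative monoid with group of units Q^×. Let Q^+ = Q∖Q^× be the set of non-units of Q, and let I be the ideal of the monoid algebra A[Q] generated by the elements e^q with q ∈ Q^+. Then A[Q]/I is isomorphic as a ring to the monoid algebra A[Q^×]. -/

import Mathlib

/-!
Since a product lies in a face `F` only if both factors do, `e^q ↦ e^q` for `q ∈ F` and `e^q ↦ 0`
for `q ∉ F` defines a retraction of `A[Q]` onto `A[F]`. Every element of `A[Q]` is congruent to its
retraction modulo the ideal generated by the `e^q` with `q ∉ F`, so this ideal is the kernel.
The group of units is a face, which in multiplicative notation means that it is a saturated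
submonoid.
-/

open MonoidAlgebra

section ExtendByZero

variable {Q M₀ : Type*} [MulOneClass Q] [MulZeroOneClass M₀] {F : Submonoid Q}

open Classical in
/-- The extension of a monoid homomorphism `f` on a face `F` of `Q` by zero outside `F`; faces are
encoded as saturated submonoids. -/
noncomputable def extendByZero (hF : F.MulSaturated) (f : F →* M₀) : Q →* M₀ where
  toFun q := if hq : q ∈ F then f ⟨q, hq⟩ else 0
  map_one' := (dif_pos F.one_mem).trans (map_one f)
  map_mul' x y := by
    by_cases hx : x ∈ F
    · by_cases hy : y ∈ F
      · simp only [hx, hy, mul_mem hx hy, dite_true, ← map_mul, MulMemClass.mk_mul_mk]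
      · simp only [hF.mul_mem_iff, hy, and_false, dite_false, mul_zero]
    · simp only [hF.mul_mem_iff, hx, false_and, dite_false, zero_mul]

theorem extendByZero_of_mem (hF : F.MulSaturated) (f : F →* M₀) {q : Q} (hq : q ∈ F) :
    extendByZero hF f q = f ⟨q, hq⟩ :=
  dif_pos hq

theorem extendByZero_of_notMem (hF : F.MulSaturated) (f : F →* M₀) {q : Q} (hq : q ∉ F) :
    extendByZero hF f q = 0 :=
  dif_neg hq

end ExtendByZero

section FaceRetraction

variable (A : Type*) [CommSemiring A] {Q : Type*} [Monoid Q] {F : Submonoid Q}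

/-- The retraction of the monoid algebra of `Q` onto that of a face `F`, killing the basis elements
outside `F`. -/
noncomputable def faceRetraction (hF : F.MulSaturated) :
    MonoidAlgebra A Q →ₐ[A] MonoidAlgebra A F :=
  lift A _ Q (extendByZero hF (of A F))

variable {A}

theorem faceRetraction_single_of_mem (hF : F.MulSaturated) {q : Q} (hq : q ∈ F) (a : A) :
    faceRetraction A hF (single q a) = single ⟨q, hq⟩ a := by
  simp [faceRetraction, extendByZero_of_mem hF _ hq]

theorem faceRetraction_single_of_notMem (hF : F.MulSaturated) {q : Q} (hq : q ∉ F) (a : A) :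
    faceRetraction A hF (single q a) = 0 := by
  simp [faceRetraction, extendByZero_of_notMem hF _ hq]

theorem faceRetraction_rightInverse (hF : F.MulSaturated) :
    Function.RightInverse (mapDomainAlgHom A A F.subtype) (faceRetraction A hF) := by
  intro y
  induction y using induction_linear with
  | zero => simp only [map_zero]
  | add y z hy hz => simp only [map_add, hy, hz]
  | single u a => simp [faceRetraction_single_of_mem hF u.2]

end FaceRetraction

theorem single_mem_span_of_image {A Q : Type*} [Semiring A] [Monoid Q] {s : Set Q} {q : Q}
    (hq : q ∈ s) (a : A) : single q a ∈ Ideal.span (of A Q '' s) := by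
  have h : single (1 : Q) a * of A Q q ∈ Ideal.span (of A Q '' s) :=
    Ideal.mul_mem_left _ _ (Ideal.subset_span ⟨q, hq, rfl⟩)
  simpa using h

section Kernel

variable {A : Type*} [CommRing A] {Q : Type*} [Monoid Q] {F : Submonoid Q}

theorem sub_faceRetraction_mem_span (hF : F.MulSaturated) (x : MonoidAlgebra A Q) :
    x - mapDomainAlgHom A A F.subtype (faceRetraction A hF x) ∈
      Ideal.span (of A Q '' (F : Set Q)ᶜ) := by
  induction x using induction_linear with
  | zero => simp only [map_zero, sub_zero, zero_mem]
  | add x y hx hy => simpa only [map_add, add_sub_add_comm] using add_mem hx hy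
  | single q a =>
    by_cases hq : q ∈ F
    · simp [faceRetraction_single_of_mem hF hq]
    · simpa only [faceRetraction_single_of_notMem hF hq, map_zero, sub_zero] using
        single_mem_span_of_image hq a

theorem ker_faceRetraction_eq_span (hF : F.MulSaturated) :
    RingHom.ker (faceRetraction A hF) = Ideal.span (of A Q '' (F : Set Q)ᶜ) := by
  apply le_antisymm
  · intro x hx
    simpa only [RingHom.mem_ker.1 hx, map_zero, sub_zero] using sub_faceRetraction_mem_span hF x
  · rw [Ideal.span_le]
    rintro _ ⟨q, hq, rfl⟩
    exact faceRetraction_single_of_notMem hF hq 1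

end Kernel

theorem mulSaturated_isUnit_submonoid (Q : Type*) [CommMonoid Q] :
    (IsUnit.submonoid Q).MulSaturated :=
  fun _ _ => IsUnit.mul_iff.1

theorem monoidAlgebra_quotient_nonunits_general {A : Type*} [CommRing A] {Q : Type*} [Monoid Q]
    {F : Submonoid Q} (hF : F.MulSaturated) (I : Ideal (MonoidAlgebra A Q)) [I.IsTwoSided]
    (hI : I = Ideal.span (of A Q '' (F : Set Q)ᶜ)) :
    Nonempty ((MonoidAlgebra A Q ⧸ I) ≃ₐ[A] MonoidAlgebra A F) := by
  obtain rfl : I = RingHom.ker (faceRetraction A hF) :=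
    hI.trans (ker_faceRetraction_eq_span hF).symm
  exact ⟨Ideal.quotientKerAlgEquivOfRightInverse (faceRetraction_rightInverse hF)⟩

/-- Let `A` be a commutative ring, `Q` a commutative monoid, `Q^+` the set of non-units of `Q`,
and `I` the ideal of the monoid algebra `A[Q]` generated by the elements `e^q` with `q ∈ Q^+`.
Then `A[Q]/I` is isomorphic as a ring to the monoid algebra `A[Q^×]` over the submonoid of
units of `Q`. -/
theorem monoidAlgebra_quotient_nonunits (A : Type*) [CommRing A] (Q : Type*) [CommMonoid Q]
    (I : Ideal (MonoidAlgebra A Q))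
    (hI : I = Ideal.span ((fun q => MonoidAlgebra.of A Q q) '' {q : Q | ¬ IsUnit q})) :
    Nonempty ((MonoidAlgebra A Q ⧸ I) ≃+* MonoidAlgebra A (IsUnit.submonoid Q)) :=
  (monoidAlgebra_quotient_nonunits_general (mulSaturated_isUnit_submonoid Q) I hI).map
    AlgEquiv.toRingEquiv
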